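/- In the r-state i.i.d. model with m(n) = ⌈c·n^{2/(r−1)+α}⌉ and l(n) = ⌈c'·n^{2/(r−1)+α}⌉ for some constants c > 0, c' > 0 and α > 0, and with Δ'_n = n^{−(1/(r−1)+α/4)}, the empirical frequency vectors satisfy P(max_{1 ≤ i ≤ r−1} |X̄_1(i) − W̄_1(i)| ≤ Δ'_n) → 1 as n → ∞, where X̄_u(i) = |{k ≤ m : X_u(k) = i}|/m and W̄_u(i) = |{k ≤ l : W_u(k) = i}|/l. -/

import Mathlib

open MeasureTheory ProbabilityTheory Filter
open scoped ENNReal NNReal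

/-- Discrete measure on `Fin r` assigning mass `q i` to the point `i`. -/
noncomputable def catMeasure (r : ℕ) (q : Fin r → ℝ) : Measure (Fin r) :=
  ∑ i : Fin r, ENNReal.ofReal (q i) • Measure.dirac i

/-- Extend a parameter vector `(p 1, …, p (r-1))` (probabilities of the values `1, …, r-1`)
to a full probability vector on `{0, 1, …, r-1}`, value `0` receiving the remaining mass. -/
noncomputable def fullProb (r : ℕ) (p : Fin (r - 1) → ℝ) : Fin r → ℝ := fun i =>
  if h : (i : ℕ) = 0 then 1 - ∑ j, p j
  else p ⟨(i : ℕ) - 1, by have := i.isLt; omega⟩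

/-- The open region `{x ∈ (0,1)^d : xᵢ > 0, x₁ + ⋯ + x_d < 1}` of admissible parameters. -/
def simplexRegion (d : ℕ) : Set (Fin d → ℝ) :=
  {x | (∀ i, 0 < x i) ∧ ∑ i, x i < 1}

/-- Joint law of (parameters, actual traces, training traces) in the `r`-state i.i.d. model:
the parameter vectors `p u` are i.i.d. with law `μP`, and conditionally on the parameters the
`n` actual traces (of length `m`) and training traces (of length `l`) consist of i.i.d.
samples from `{0, …, r-1}` where value `i ≥ 1` has probability `p u i` and value `0` the
remaining probability; all traces are mutually independent. -/
noncomputable def rStateLaw (n m l r : ℕ) (μP : Measure (Fin (r - 1) → ℝ)) :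
    Measure ((Fin n → Fin (r - 1) → ℝ) × (Fin n → Fin m → Fin r) × (Fin n → Fin l → Fin r)) :=
  (Measure.pi fun _ : Fin n => μP).bind fun p =>
    (Measure.dirac p).prod
      ((Measure.pi fun u : Fin n =>
          Measure.pi fun _ : Fin m => catMeasure r (fullProb r (p u))).prod
        (Measure.pi fun u : Fin n =>
          Measure.pi fun _ : Fin l => catMeasure r (fullProb r (p u))))

/-- Empirical frequency of the value `i` in a sample `x` of size `m`. -/
noncomputable def empFreq {m r : ℕ} (x : Fin m → Fin r) (i : Fin r) : ℝ :=
  ((Finset.univ.filter fun k => x k = i).card : ℝ) / m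

/-!
Conditionally on its parameter `p`, each empirical frequency of a user is an average of `k`
independent indicators with mean `p i`, hence has variance at most `1 / (4 * k)`. By Chebyshev's
inequality it is farther than `Δ / 2` from `p i` with probability at most `1 / (k * Δ ^ 2)`. The
triangle inequality through `p i` and a union bound over the `r` values give
`P(∃ i, Δ < |X̄ i - W̄ i|) ≤ r * (1 / (m * Δ ^ 2) + 1 / (l * Δ ^ 2))` for every
parameter. For the given rates, `m * Δ ^ 2` and `l * Δ ^ 2` grow at least like `n ^ (α / 2)`.
-/

lemma ae_withDensity_mem_of_eq_zero {α : Type*} [MeasurableSpace α] {μ : Measure α} {f : α → ℝ≥0∞}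
    {s : Set α} (hs : MeasurableSet s) (hf : ∀ x ∉ s, f x = 0) :
    ∀ᵐ x ∂μ.withDensity f, x ∈ s := by
  change μ.withDensity f sᶜ = 0
  rw [withDensity_apply _ hs.compl, setLIntegral_congr_fun hs.compl hf, lintegral_zero]

lemma tendsto_measureReal_one_of_subset {ι : Type*} {L : Filter ι} {Ω : ι → Type*}
    {mΩ : ∀ n, MeasurableSpace (Ω n)} {μ : ∀ n, Measure (Ω n)} [∀ n, IsProbabilityMeasure (μ n)]
    {s t : ∀ n, Set (Ω n)} (hs : Tendsto (fun n => (μ n).real (s n)) L (nhds 1))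
    (hst : ∀ n, s n ⊆ t n) :
    Tendsto (fun n => (μ n).real (t n)) L (nhds 1) :=
  tendsto_of_tendsto_of_tendsto_of_le_of_le hs tendsto_const_nhds
    (fun n => measureReal_mono (hst n)) fun _ => measureReal_le_one

lemma tendsto_mul_rpow_neg_sq_atTop {k : ℕ → ℝ} {c β γ : ℝ} (hc : 0 < c) (hγβ : 2 * γ < β)
    (hk : ∀ n : ℕ, c * (n : ℝ) ^ β ≤ k n) :
    Tendsto (fun n : ℕ => k n * ((n : ℝ) ^ (-γ)) ^ 2) atTop atTop := by
  have hpow : Tendsto (fun n : ℕ => c * (n : ℝ) ^ (β - 2 * γ)) atTop atTop :=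
    ((tendsto_rpow_atTop (sub_pos.2 hγβ)).comp tendsto_natCast_atTop_atTop).const_mul_atTop hc
  refine tendsto_atTop_mono' _ ?_ hpow
  filter_upwards [eventually_gt_atTop 0] with n hn
  have hn' : (0 : ℝ) < n := Nat.cast_pos.2 hn
  calc c * (n : ℝ) ^ (β - 2 * γ) = c * (n : ℝ) ^ β * ((n : ℝ) ^ (-γ)) ^ 2 := by
        rw [← Real.rpow_mul_natCast hn'.le, mul_assoc, ← Real.rpow_add hn']
        push_cast
        ring_nf
    _ ≤ k n * ((n : ℝ) ^ (-γ)) ^ 2 := by gcongr; exact hk n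

section Frequencies

variable {r m l : ℕ} {ν : Measure (Fin r)} [IsProbabilityMeasure ν] {ε : ℝ}

lemma empFreq_eq_sum_indicator_div (x : Fin m → Fin r) (i : Fin r) :
    empFreq x i = (∑ k, Set.indicator {i} (1 : Fin r → ℝ) (x k)) / m := by
  simp [empFreq, Set.indicator_apply]

lemma integral_empFreq (hm : m ≠ 0) (i : Fin r) :
    ∫ x, empFreq x i ∂(Measure.pi fun _ : Fin m => ν) = ν.real {i} := by
  have hcoord (k : Fin m) : ∫ x : Fin m → Fin r, Set.indicator {i} (1 : Fin r → ℝ) (x k)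
      ∂(Measure.pi fun _ => ν) = ν.real {i} := by
    rw [integral_comp_eval (μ := fun _ : Fin m => ν) (f := Set.indicator {i} (1 : Fin r → ℝ))
      AEStronglyMeasurable.of_discrete, integral_indicator_one (measurableSet_singleton i)]
  simp_rw [empFreq_eq_sum_indicator_div, integral_div]
  rw [integral_finsetSum _ fun _ _ => .of_finite]
  simp_rw [hcoord]
  simp [hm]

lemma variance_empFreq_le (i : Fin r) :
    Var[fun x => empFreq x i; Measure.pi fun _ : Fin m => ν] ≤ (4 * m : ℝ)⁻¹ := by
  have hcoord : Var[Set.indicator {i} (1 : Fin r → ℝ); ν] ≤ ((1 - 0) / 2) ^ 2 :=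
    variance_le_sq_of_bounded
      (.of_forall fun a => by by_cases h : a = i <;> simp [h])
      AEMeasurable.of_discrete
  have hsum : (fun x : Fin m → Fin r => empFreq x i) =
      fun x => (m : ℝ)⁻¹ * (∑ k, fun x : Fin m → Fin r =>
        Set.indicator {i} (1 : Fin r → ℝ) (x k)) x := by
    ext x
    rw [empFreq_eq_sum_indicator_div, Finset.sum_apply, div_eq_inv_mul]
  rw [hsum, variance_const_mul,
    variance_sum_pi (X := fun _ => Set.indicator {i} (1 : Fin r → ℝ)) fun _ => .of_discrete]
  calc (m : ℝ)⁻¹ ^ 2 * ∑ _k : Fin m, Var[Set.indicator {i} (1 : Fin r → ℝ); ν]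
      ≤ (m : ℝ)⁻¹ ^ 2 * ∑ _k : Fin m, ((1 - 0) / 2) ^ 2 := by gcongr
    _ = (4 * m : ℝ)⁻¹ := by
      rcases eq_or_ne m 0 with rfl | hm
      · simp
      · simp only [Finset.sum_const, Finset.card_univ, Fintype.card_fin, nsmul_eq_mul]
        field_simp
        norm_num

lemma measureReal_le_abs_empFreq_sub_le (hm : m ≠ 0) (hε : 0 < ε) (i : Fin r) :
    (Measure.pi fun _ : Fin m => ν).real {x | ε ≤ |empFreq x i - ν.real {i}|} ≤
      (4 * m * ε ^ 2)⁻¹ := by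
  have hcheb := meas_ge_le_variance_div_sq
    (MemLp.of_discrete (f := fun x => empFreq x i) (μ := Measure.pi fun _ : Fin m => ν)) hε
  rw [integral_empFreq hm] at hcheb
  calc _ ≤ Var[fun x => empFreq x i; Measure.pi fun _ : Fin m => ν] / ε ^ 2 :=
        ENNReal.toReal_le_of_le_ofReal (div_nonneg (variance_nonneg _ _) (sq_nonneg ε)) hcheb
    _ ≤ (4 * m : ℝ)⁻¹ / ε ^ 2 := by gcongr; exact variance_empFreq_le i
    _ = (4 * m * ε ^ 2)⁻¹ := by rw [mul_inv (4 * m : ℝ), div_eq_mul_inv]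

lemma measureReal_prod_lt_abs_empFreq_sub_empFreq_le (hm : m ≠ 0) (hl : l ≠ 0) (hε : 0 < ε)
    (i : Fin r) :
    ((Measure.pi fun _ : Fin m => ν).prod (Measure.pi fun _ : Fin l => ν)).real
        {y | ε < |empFreq y.1 i - empFreq y.2 i|} ≤
      (m * ε ^ 2)⁻¹ + (l * ε ^ 2)⁻¹ := by
  let far (k : ℕ) : Set (Fin k → Fin r) := {x | ε / 2 ≤ |empFreq x i - ν.real {i}|}
  have hfar {k : ℕ} (hk : k ≠ 0) :
      (Measure.pi fun _ : Fin k => ν).real (far k) ≤ (k * ε ^ 2)⁻¹ :=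
    (measureReal_le_abs_empFreq_sub_le hk (half_pos hε) i).trans_eq (by ring_nf)
  have hsub : {y : (Fin m → Fin r) × (Fin l → Fin r) | ε < |empFreq y.1 i - empFreq y.2 i|} ⊆
      far m ×ˢ Set.univ ∪ Set.univ ×ˢ far l := by
    intro y hy
    by_contra hnear
    simp only [far, Set.mem_union, Set.mem_prod, Set.mem_univ, and_true, true_and,
      Set.mem_ofPred_eq, not_or, not_le] at hy hnear
    have htri := abs_sub_le (empFreq y.1 i) (ν.real {i}) (empFreq y.2 i)
    rw [abs_sub_comm (ν.real {i})] at htri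
    linarith [hnear.1, hnear.2]
  let κ := (Measure.pi fun _ : Fin m => ν).prod (Measure.pi fun _ : Fin l => ν)
  calc κ.real {y | ε < |empFreq y.1 i - empFreq y.2 i|}
      ≤ κ.real (far m ×ˢ Set.univ ∪ Set.univ ×ˢ far l) := measureReal_mono hsub
    _ ≤ κ.real (far m ×ˢ Set.univ) + κ.real (Set.univ ×ˢ far l) := measureReal_union_le _ _
    _ = (Measure.pi fun _ : Fin m => ν).real (far m) +
        (Measure.pi fun _ : Fin l => ν).real (far l) := by simp [κ, measureReal_prod_prod]
    _ ≤ (m * ε ^ 2)⁻¹ + (l * ε ^ 2)⁻¹ := add_le_add (hfar hm) (hfar hl)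

lemma measureReal_prod_exists_lt_abs_empFreq_sub_empFreq_le (hm : m ≠ 0) (hl : l ≠ 0)
    (hε : 0 < ε) :
    ((Measure.pi fun _ : Fin m => ν).prod (Measure.pi fun _ : Fin l => ν)).real
        {y | ∃ i, ε < |empFreq y.1 i - empFreq y.2 i|} ≤
      r * ((m * ε ^ 2)⁻¹ + (l * ε ^ 2)⁻¹) := by
  rw [Set.ofPred_exists]
  refine (measureReal_iUnion_fintype_le _).trans <| (Finset.sum_le_sum fun i _ =>
    measureReal_prod_lt_abs_empFreq_sub_empFreq_le hm hl hε i).trans_eq ?_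
  rw [Finset.sum_const, Finset.card_univ, Fintype.card_fin, nsmul_eq_mul]

end Frequencies

lemma measurableSet_simplexRegion (d : ℕ) : MeasurableSet (simplexRegion d) := by
  unfold simplexRegion
  measurability

section Law

variable {n m l r : ℕ}

lemma isProbabilityMeasure_catMeasure {q : Fin r → ℝ} (hq : q ∈ stdSimplex ℝ (Fin r)) :
    IsProbabilityMeasure (catMeasure r q) := by
  constructor
  simp only [catMeasure, Measure.coe_finsetSum, Finset.sum_apply, Measure.smul_apply,
    measure_univ, smul_eq_mul, mul_one]
  rw [← ENNReal.ofReal_sum_of_nonneg fun i _ => hq.1 i, hq.2, ENNReal.ofReal_one]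

lemma sum_fullProb (hr : r ≠ 0) (p : Fin (r - 1) → ℝ) : ∑ i, fullProb r p i = 1 := by
  obtain ⟨d, rfl⟩ := Nat.exists_eq_succ_of_ne_zero hr
  rw [Fin.sum_univ_succ]
  simp [fullProb]

lemma fullProb_mem_stdSimplex (hr : r ≠ 0) {p : Fin (r - 1) → ℝ}
    (hp : p ∈ simplexRegion (r - 1)) : fullProb r p ∈ stdSimplex ℝ (Fin r) := by
  refine ⟨fun i => ?_, sum_fullProb hr p⟩
  unfold fullProb
  split_ifs
  · exact sub_nonneg.2 hp.2.le
  · exact (hp.1 _).le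

lemma ae_withDensity_fullProb_mem_stdSimplex (hr : r ≠ 0) {μ : Measure (Fin (r - 1) → ℝ)}
    {f : (Fin (r - 1) → ℝ) → ℝ≥0∞} (hf : ∀ x ∉ simplexRegion (r - 1), f x = 0) :
    ∀ᵐ p ∂μ.withDensity f, fullProb r p ∈ stdSimplex ℝ (Fin r) :=
  (ae_withDensity_mem_of_eq_zero (measurableSet_simplexRegion (r - 1)) hf).mono fun _ =>
    fullProb_mem_stdSimplex hr

lemma rStateLaw_exists_lt_abs_empFreq_sub_empFreq_le
    {μP : Measure (Fin (r - 1) → ℝ)} [IsProbabilityMeasure μP]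
    (hμP : ∀ᵐ p ∂μP, fullProb r p ∈ stdSimplex ℝ (Fin r)) (hm : m ≠ 0) (hl : l ≠ 0)
    {ε : ℝ} (hε : 0 < ε) (u : Fin n) :
    rStateLaw n m l r μP {z | ∃ i, ε < |empFreq (z.2.1 u) i - empFreq (z.2.2 u) i|} ≤
      ENNReal.ofReal (r * ((m * ε ^ 2)⁻¹ + (l * ε ^ 2)⁻¹)) := by
  let far : Set ((Fin m → Fin r) × (Fin l → Fin r)) :=
    {y | ∃ i, ε < |empFreq y.1 i - empFreq y.2 i|}
  have hparam : ∀ᵐ p ∂(Measure.pi fun _ : Fin n => μP),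
      ∀ v, fullProb r (p v) ∈ stdSimplex ℝ (Fin r) :=
    eventually_all.2 fun _ =>
      (Measure.tendsto_eval_ae_ae (μ := fun _ : Fin n => μP)).eventually hμP
  have hmeas : MeasurableSet ((fun z : (Fin n → Fin (r - 1) → ℝ) × (Fin n → Fin m → Fin r) ×
      (Fin n → Fin l → Fin r) => (z.2.1 u, z.2.2 u)) ⁻¹' far) :=
    MeasurableSet.of_discrete.preimage (by fun_prop)
  refine (Measure.bind_apply_le _ hmeas).trans ?_
  refine (lintegral_mono_ae
    (g := fun _ => ENNReal.ofReal (r * ((m * ε ^ 2)⁻¹ + (l * ε ^ 2)⁻¹))) ?_).trans_eq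
    (by rw [lintegral_const, measure_univ, mul_one])
  filter_upwards [hparam] with p hp
  let ν (v : Fin n) : Measure (Fin r) := catMeasure r (fullProb r (p v))
  have (v : Fin n) : IsProbabilityMeasure (ν v) := isProbabilityMeasure_catMeasure (hp v)
  have hproj := ((measurePreserving_eval (fun v => Measure.pi fun _ : Fin m => ν v) u).prod
    (measurePreserving_eval (fun v => Measure.pi fun _ : Fin l => ν v) u)).comp
    (measurePreserving_snd (μ := Measure.dirac p))
  refine (hproj.measure_preimage (s := far) MeasurableSet.of_discrete.nullMeasurableSet).trans_le ?_
  rw [← ofReal_measureReal]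
  exact ENNReal.ofReal_le_ofReal
    (measureReal_prod_exists_lt_abs_empFreq_sub_empFreq_le hm hl hε)

end Law

theorem r_state_user1_freq_close_general {r : ℕ} {μP : Measure (Fin (r - 1) → ℝ)}
    [IsProbabilityMeasure μP] (hμP : ∀ᵐ p ∂μP, fullProb r p ∈ stdSimplex ℝ (Fin r))
    {m l : ℕ → ℕ} {Δ : ℕ → ℝ} (hΔ : ∀ᶠ n in atTop, 0 < Δ n)
    (hm : Tendsto (fun n => m n * Δ n ^ 2) atTop atTop)
    (hl : Tendsto (fun n => l n * Δ n ^ 2) atTop atTop)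
    {Ω : ℕ → Type*} {mΩ : ∀ n, MeasurableSpace (Ω n)}
    {μ : ∀ n, Measure (Ω n)} [∀ n, IsProbabilityMeasure (μ n)]
    {P : ∀ n, Ω n → Fin n → Fin (r - 1) → ℝ}
    {X : ∀ n, Ω n → Fin n → Fin (m n) → Fin r}
    {W : ∀ n, Ω n → Fin n → Fin (l n) → Fin r}
    (hP : ∀ n, Measurable (P n)) (hX : ∀ n, Measurable (X n)) (hW : ∀ n, Measurable (W n))
    (hlaw : ∀ n, Measure.map (fun ω => (P n ω, X n ω, W n ω)) (μ n) =
      rStateLaw n (m n) (l n) r μP) :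
    Tendsto (fun n => (μ n).real {ω | ∀ hn : 0 < n, ∀ i : Fin r,
        |empFreq (X n ω ⟨0, hn⟩) i - empFreq (W n ω ⟨0, hn⟩) i| ≤ Δ n}) atTop (nhds 1) := by
  have hbound : Tendsto (fun n => 1 - r * ((m n * Δ n ^ 2)⁻¹ + (l n * Δ n ^ 2)⁻¹)) atTop
      (nhds 1) := by
    simpa using ((hm.inv_tendsto_atTop.add hl.inv_tendsto_atTop).const_mul (r : ℝ)).const_sub 1
  refine tendsto_of_tendsto_of_tendsto_of_le_of_le' hbound tendsto_const_nhds ?_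
    (.of_forall fun _ => measureReal_le_one)
  filter_upwards [hΔ, hm.eventually_ne_atTop 0, hl.eventually_ne_atTop 0, eventually_gt_atTop 0]
    with n hΔn hmn hln hn
  let far : Set (Ω n) :=
    {ω | ∃ i, Δ n < |empFreq (X n ω ⟨0, hn⟩) i - empFreq (W n ω ⟨0, hn⟩) i|}
  have hfar_meas : MeasurableSet far := by
    have hpair : Measurable fun ω => (X n ω ⟨0, hn⟩, W n ω ⟨0, hn⟩) :=
      (hX n).eval.prodMk (hW n).eval
    have hdisc : MeasurableSet {y : (Fin (m n) → Fin r) × (Fin (l n) → Fin r) |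
        ∃ i, Δ n < |empFreq y.1 i - empFreq y.2 i|} := .of_discrete
    exact hpair hdisc
  have hfar : μ n far ≤ ENNReal.ofReal (r * ((m n * Δ n ^ 2)⁻¹ + (l n * Δ n ^ 2)⁻¹)) := by
    refine le_trans ?_ (rStateLaw_exists_lt_abs_empFreq_sub_empFreq_le hμP
      (Nat.cast_ne_zero.1 (left_ne_zero_of_mul hmn)) (Nat.cast_ne_zero.1 (left_ne_zero_of_mul hln))
      hΔn ⟨0, hn⟩)
    rw [← hlaw n]
    exact Measure.le_map_apply ((hP n).prodMk ((hX n).prodMk (hW n))).aemeasurable _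
  have hgood : farᶜ = {ω | ∀ hn : 0 < n, ∀ i : Fin r,
      |empFreq (X n ω ⟨0, hn⟩) i - empFreq (W n ω ⟨0, hn⟩) i| ≤ Δ n} := by
    ext ω
    simp [far, hn]
  rw [← hgood, probReal_compl_eq_one_sub hfar_meas]
  gcongr
  exact ENNReal.toReal_le_of_le_ofReal (by positivity) hfar

/-- **Closeness of user 1's empirical frequency vectors in the `r`-state i.i.d. model.**
With `m n = ⌈c n^{2/(r-1)+α}⌉`, `l n = ⌈c' n^{2/(r-1)+α}⌉` and
`Δ'_n = n^{-(1/(r-1)+α/4)}`, the empirical frequency vectors satisfy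
`P(max_{1 ≤ i ≤ r-1} |X̄_1(i) − W̄_1(i)| ≤ Δ'_n) → 1` as `n → ∞`.  (Since `Y_{Π(1)} = X_1`
under anonymization, `X̄_1` is the anonymized empirical frequency vector `Ȳ_{Π(1)}`.) -/
theorem r_state_user1_freq_close
    (r : ℕ) (hr : 2 ≤ r)
    (f : (Fin (r - 1) → ℝ) → ℝ) (δ₁ δ₂ : ℝ) (hδ₁ : 0 < δ₁)
    (μP : Measure (Fin (r - 1) → ℝ)) [IsProbabilityMeasure μP]
    (hμP : μP = volume.withDensity fun x => ENNReal.ofReal (f x))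
    (hf0 : ∀ x ∉ simplexRegion (r - 1), f x = 0)
    (hf : ∀ x ∈ simplexRegion (r - 1), δ₁ < f x ∧ f x < δ₂)
    (m l : ℕ → ℕ) (c c' α : ℝ) (hc : 0 < c) (hc' : 0 < c') (hα : 0 < α)
    (hm : ∀ n : ℕ, m n = ⌈c * (n : ℝ) ^ (2 / ((r : ℝ) - 1) + α)⌉₊)
    (hl : ∀ n : ℕ, l n = ⌈c' * (n : ℝ) ^ (2 / ((r : ℝ) - 1) + α)⌉₊)
    (Ω : ℕ → Type) (mΩ : ∀ n, MeasurableSpace (Ω n))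
    (μ : ∀ n, Measure (Ω n)) (hμ : ∀ n, IsProbabilityMeasure (μ n))
    (P : ∀ n, Ω n → Fin n → Fin (r - 1) → ℝ)
    (X : ∀ n, Ω n → Fin n → Fin (m n) → Fin r)
    (W : ∀ n, Ω n → Fin n → Fin (l n) → Fin r)
    (hP : ∀ n, Measurable (P n)) (hX : ∀ n, Measurable (X n))
    (hW : ∀ n, Measurable (W n))
    (hlaw : ∀ n, Measure.map (fun ω => (P n ω, X n ω, W n ω)) (μ n) =
      rStateLaw n (m n) (l n) r μP) :
    Tendsto (fun n =>
        (μ n {ω | ∀ hn : 0 < n, ∀ i : Fin r, (i : ℕ) ≠ 0 →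
            |empFreq (X n ω ⟨0, hn⟩) i - empFreq (W n ω ⟨0, hn⟩) i| ≤
              (n : ℝ) ^ (-(1 / ((r : ℝ) - 1) + α / 4))}).toReal)
      atTop (nhds 1) := by
  have := hμ
  have hsupp : ∀ᵐ p ∂μP, fullProb r p ∈ stdSimplex ℝ (Fin r) := hμP ▸
    ae_withDensity_fullProb_mem_stdSimplex (by lia) fun x hx => by
      rw [hf0 x hx, ENNReal.ofReal_zero]
  have hrate : 2 * (1 / ((r : ℝ) - 1) + α / 4) < 2 / ((r : ℝ) - 1) + α := by
    rw [mul_add, mul_one_div]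
    linarith
  exact tendsto_measureReal_one_of_subset
    (r_state_user1_freq_close_general hsupp
      ((eventually_gt_atTop 0).mono fun n hn => by positivity)
      (tendsto_mul_rpow_neg_sq_atTop hc hrate fun n => hm n ▸ Nat.le_ceil _)
      (tendsto_mul_rpow_neg_sq_atTop hc' hrate fun n => hl n ▸ Nat.le_ceil _) hP hX hW hlaw)
    fun n ω hω hn i _ => hω hn i
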